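/- Fix an integer d ≥ 2 and a unit vector ψ ∈ ℂ^d. Consider single-call probabilistic protocols (S, S_ch) with d_F = d, together with p ∈ ℝ, satisfying S ⋆ U = p · U̅|ψ⟩⟨ψ|Uᵀ for all U ∈ SU(d) (exact probabilistic unitary complex conjugation on the known pure state ψ). If d > 2, then every such protocol has p = 0. If d = 2, then there exists such a protocol with p = 1, and every such protocol has p ≤ 1; hence the maximal success probability equals 1 for d = 2 and 0 for d > 2. -/

import Mathlib

open Matrix Kronecker BigOperators ComplexOrder

noncomputable section

/-- Entrywise complex conjugate `U̅` of a matrix. -/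
def mconj {d : ℕ} (U : Matrix (Fin d) (Fin d) ℂ) : Matrix (Fin d) (Fin d) ℂ :=
  U.map (starRingEnd ℂ)

/-- Rank-one outer product `|v⟩⟨v|`. -/
def outer {n : Type*} (v : n → ℂ) : Matrix n n ℂ :=
  Matrix.vecMulVec v (star v)

/-- Choi vector `|U⟩⟩ = Σ_i e_i ⊗ U e_i`. -/
def choiVec {d : ℕ} (U : Matrix (Fin d) (Fin d) ℂ) : Fin d × Fin d → ℂ :=
  fun p => U p.2 p.1

/-- `|U⟩⟩⟨⟨U|`. -/
def choiProj {d : ℕ} (U : Matrix (Fin d) (Fin d) ℂ) :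
    Matrix (Fin d × Fin d) (Fin d × Fin d) ℂ :=
  outer (choiVec U)

/-- Partial trace over the first tensor factor. -/
def ptrLeft {α β : Type*} [Fintype α] (S : Matrix (α × β) (α × β) ℂ) :
    Matrix β β ℂ :=
  fun b b' => ∑ a, S (a, b) (a, b')

/-- Partial trace over the second (last) tensor factor. -/
def ptrRight {α β : Type*} [Fintype β] (S : Matrix (α × β) (α × β) ℂ) :
    Matrix α α ℂ :=
  fun a a' => ∑ b, S (a, b) (a', b)

/-- Action `S ⋆ U := Tr_{IO}[ S · (|U̅⟩⟩⟨⟨U̅|_{IO} ⊗ 1_F) ]` of a single-call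
supermap `S` on `I ⊗ O ⊗ F` applied to the unitary channel given by `U`. -/
def act {d dF : ℕ}
    (S : Matrix ((Fin d × Fin d) × Fin dF) ((Fin d × Fin d) × Fin dF) ℂ)
    (U : Matrix (Fin d) (Fin d) ℂ) : Matrix (Fin dF) (Fin dF) ℂ :=
  ptrLeft (S * (choiProj (mconj U) ⊗ₖ (1 : Matrix (Fin dF) (Fin dF) ℂ)))

/-- A single-call probabilistic protocol: `0 ≤ S ≤ S_ch` with
`Tr_F(S_ch) = σ ⊗ 1_d`, `σ ≥ 0`, `Tr σ = 1`. -/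
def IsProtocol {d dF : ℕ}
    (S Sch : Matrix ((Fin d × Fin d) × Fin dF) ((Fin d × Fin d) × Fin dF) ℂ) : Prop :=
  S.PosSemidef ∧ (Sch - S).PosSemidef ∧
    ∃ σ : Matrix (Fin d) (Fin d) ℂ, σ.PosSemidef ∧ σ.trace = 1 ∧
      ptrRight Sch = σ ⊗ₖ (1 : Matrix (Fin d) (Fin d) ℂ)

/-!
Put `K V = |V⟩⟩ ⊗ 1_F`, so that `S ⋆ U = (K U̅)ᴴ S (K U̅)`. As `S ≥ 0`, an output proportional to
`U̅|ψ⟩⟨ψ|Uᵀ` forces `S (K V) w = 0` whenever `V = U̅` is special unitary and `w ⟂ Vψ`; rescaling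
by a phase extends this to all unitary `V`. If `x = ψ` or `x ⟂ ψ`, composing `V` with the
reflection in `xᗮ` does not change the line through `Vψ`, and the two unitaries differ by
`2|Vx⟩⟨x|`. For `d > 2` the vector `Vx` can be any unit vector orthogonal to `w`, so the bilinear
map `(u, w) ↦ S (K |u⟩⟨x|) w` vanishes on orthogonal pairs. Comparing its values at `(u, u)`,
`(v, v)` and `(iv, iv)`, where `v ⟂ u` has the same norm, shows that it also vanishes on the
diagonal, hence identically. Expanding matrices in an orthonormal basis containing `ψ` gives
`S = 0`.

For `d = 2` complex conjugation on `SU(2)` is conjugation by the Pauli matrix `Y`, so it can be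
carried out deterministically.
-/

section InnerProductSpace

open Module Submodule InnerProductSpace

lemma span_ne_top_of_card_lt_finrank {R M : Type*} [Ring R] [StrongRankCondition R]
    [AddCommGroup M] [Module R M] {s : Finset M} (hs : s.card < finrank R M) :
    span R (s : Set M) ≠ ⊤ := by
  intro h
  have := finrank_span_finset_le_card (R := R) s
  rw [Set.finrank, h, finrank_top] at this
  omega

section RCLike

variable {𝕜 E : Type*} [RCLike 𝕜] [NormedAddCommGroup E] [InnerProductSpace 𝕜 E]

lemma exists_mem_orthogonal_norm_eq_one {K : Submodule 𝕜 E} [K.HasOrthogonalProjection]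
    (hK : K ≠ ⊤) : ∃ v ∈ Kᗮ, ‖v‖ = 1 := by
  obtain ⟨v, hv, hv0⟩ := exists_mem_ne_zero_of_ne_bot (mt orthogonal_eq_bot_iff.1 hK)
  exact ⟨(‖v‖⁻¹ : 𝕜) • v, Kᗮ.smul_mem _ hv, norm_smul_inv_norm hv0⟩

lemma exists_linearIsometryEquiv_apply_eq [FiniteDimensional 𝕜 E] {ι : Type*} {a b : ι → E}
    (ha : Orthonormal 𝕜 a) (hb : Orthonormal 𝕜 b) : ∃ V : E ≃ₗᵢ[𝕜] E, ∀ i, V (a i) = b i := by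
  let e : Basis ι 𝕜 (span 𝕜 (Set.range a)) := Basis.span ha.linearIndependent
  have coe_e : (span 𝕜 (Set.range a)).subtypeₗᵢ ∘ e = a := by
    ext i; simp [e, Basis.span_apply]
  have he : Orthonormal 𝕜 e := by
    rwa [← LinearIsometry.orthonormal_comp_iff (span 𝕜 (Set.range a)).subtypeₗᵢ, coe_e]
  have constr_e : e.constr 𝕜 b ∘ e = b := by
    ext i; simp
  let L := (e.constr 𝕜 b).isometryOfOrthonormal he (constr_e.symm ▸ hb)
  refine ⟨L.extend.toLinearIsometryEquiv rfl, fun i => ?_⟩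
  calc L.extend (a i) = L.extend (e i) := congrArg L.extend (congrFun coe_e i).symm
    _ = L (e i) := L.extend_apply _
    _ = b i := congrFun constr_e i

lemma sum_rankOne_apply_orthonormalBasis {ι : Type*} [Fintype ι]
    (b : OrthonormalBasis ι 𝕜 E) (A : E →L[𝕜] E) : ∑ i, rankOne 𝕜 (A (b i)) (b i) = A := by
  simp_rw [← comp_rankOne, ← ContinuousLinearMap.comp_finsetSum, b.sum_rankOne_eq_id,
    ContinuousLinearMap.comp_id]

end RCLike

section Complex

variable {E F : Type*} [NormedAddCommGroup E] [InnerProductSpace ℂ E]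
  [AddCommGroup F] [Module ℂ F]

lemma apply_self_eq_zero_of_apply_orthogonal_eq_zero (hE : 1 < finrank ℂ E)
    {f : E →ₗ[ℂ] E →ₗ[ℂ] F} (hf : ∀ u w, ⟪u, w⟫_ℂ = 0 → f u w = 0) (u : E) : f u u = 0 := by
  have apply_self_eq (u v : E) (huv : ⟪u, v⟫_ℂ = 0) (h_norm : ‖u‖ = ‖v‖) : f u u = f v v := by
    have hvu : ⟪v, u⟫_ℂ = 0 := inner_eq_zero_symm.1 huv
    have h := hf (u + v) (u - v) (by simp [huv, hvu, inner_self_eq_norm_sq_to_K, h_norm])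
    simpa [hf u v huv, hf v u hvu, ← sub_eq_add_neg, sub_eq_zero] using h
  obtain ⟨v, huv, h_norm⟩ : ∃ v, ⟪u, v⟫_ℂ = 0 ∧ ‖u‖ = ‖v‖ := by
    obtain ⟨v, hv, hv_norm⟩ := exists_mem_orthogonal_norm_eq_one
      (span_ne_top_of_card_lt_finrank (R := ℂ) (s := {u}) (by simpa using hE))
    have huv : ⟪u, v⟫_ℂ = 0 := hv u (subset_span (by simp))
    exact ⟨(‖u‖ : ℂ) • v, by simp [huv], by simp [norm_smul, hv_norm]⟩
  have h_neg : f u u = -f u u :=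
    calc f u u = f (Complex.I • v) (Complex.I • v) :=
          apply_self_eq u _ (by simp [huv]) (by simp [norm_smul, h_norm])
      _ = -f v v := by
          rw [map_smul, map_smul, LinearMap.smul_apply, smul_smul, Complex.I_mul_I, neg_one_smul]
      _ = -f u u := by rw [apply_self_eq u v huv h_norm]
  have := IsAddTorsionFree.of_isTorsionFree ℂ F
  exact self_eq_neg.1 h_neg

lemma eq_zero_of_apply_orthogonal_eq_zero (hE : 1 < finrank ℂ E) {f : E →ₗ[ℂ] E →ₗ[ℂ] F}
    (hf : ∀ u w, ⟪u, w⟫_ℂ = 0 → f u w = 0) : f = 0 := by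
  ext u w
  obtain ⟨y, hy, v, hv, rfl⟩ := (ℂ ∙ u).exists_add_mem_mem_orthogonal w
  obtain ⟨c, rfl⟩ := mem_span_singleton.1 hy
  simp [apply_self_eq_zero_of_apply_orthogonal_eq_zero hE hf u,
    hf u v (mem_orthogonal_singleton_iff_inner_right.1 hv)]

variable {T : (E →L[ℂ] E) →ₗ[ℂ] E →ₗ[ℂ] F} {ψ : E}

lemma apply_rankOne_eq_zero_of_inner_eq_zero
    (hT : ∀ V : E ≃ₗᵢ[ℂ] E, ∀ w, ⟪V ψ, w⟫_ℂ = 0 → T (V : E →L[ℂ] E) w = 0)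
    {x w : E} (hx : ‖x‖ = 1) (hxψ : x = ψ ∨ ⟪x, ψ⟫_ℂ = 0) (V : E ≃ₗᵢ[ℂ] E) (hw : ⟪V ψ, w⟫_ℂ = 0) :
    T (rankOne ℂ (V x) x) w = 0 := by
  let R := (ℂ ∙ x)ᗮ.reflection
  have hR : ⟪R.trans V ψ, w⟫_ℂ = 0 := by
    obtain rfl | hxψ := hxψ
    · simp [R, reflection_orthogonalComplement_singleton_eq_neg, hw]
    · have R_ψ : R ψ = ψ :=
        reflection_mem_subspace_eq_self (mem_orthogonal_singleton_iff_inner_right.2 hxψ)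
      rwa [LinearIsometryEquiv.trans_apply, R_ψ]
  have two_smul_rankOne :
      (2 : ℂ) • rankOne ℂ (V x) x = (V : E →L[ℂ] E) - (R.trans V : E ≃ₗᵢ[ℂ] E) := by
    ext y
    simp [R, reflection_orthogonal_apply, reflection_singleton_apply, hx, two_smul]
  have : (2 : ℂ) • T (rankOne ℂ (V x) x) w = 0 := by
    rw [← LinearMap.smul_apply, ← map_smul, two_smul_rankOne, map_sub, LinearMap.sub_apply,
      hT V w hw, hT _ w hR, sub_zero]
  exact (smul_eq_zero.1 this).resolve_left two_ne_zero

variable [FiniteDimensional ℂ E]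

lemma exists_linearIsometryEquiv_apply_eq_and_inner_eq_zero (hE : 2 < finrank ℂ E) {x u w : E}
    (hx : ‖x‖ = 1) (hψ : ‖ψ‖ = 1) (hxψ : x = ψ ∨ ⟪x, ψ⟫_ℂ = 0) (hu : ‖u‖ = 1) (huw : ⟪u, w⟫_ℂ = 0) :
    ∃ V : E ≃ₗᵢ[ℂ] E, V x = u ∧ ⟪V ψ, w⟫_ℂ = 0 := by
  classical
  obtain rfl | hxψ := hxψ
  · obtain ⟨V, hV⟩ := exists_linearIsometryEquiv_apply_eq (𝕜 := ℂ) (a := ![x]) (b := ![u])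
      (by simp [hx]) (by simp [hu])
    have hVx : V x = u := hV 0
    exact ⟨V, hVx, by rwa [hVx]⟩
  · obtain ⟨v, hv, hv_norm⟩ := exists_mem_orthogonal_norm_eq_one
      (span_ne_top_of_card_lt_finrank (R := ℂ) (s := {u, w}) (Finset.card_le_two.trans_lt hE))
    have huv : ⟪u, v⟫_ℂ = 0 := hv u (subset_span (by simp))
    have hwv : ⟪w, v⟫_ℂ = 0 := hv w (subset_span (by simp))
    obtain ⟨V, hV⟩ := exists_linearIsometryEquiv_apply_eq (𝕜 := ℂ) (a := ![x, ψ]) (b := ![u, v])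
      (by simp [orthonormal_vecCons_iff, hx, hψ, hxψ])
      (by simp [orthonormal_vecCons_iff, hu, hv_norm, huv])
    have hVψ : V ψ = v := hV 1
    exact ⟨V, hV 0, by rw [hVψ, inner_eq_zero_symm, hwv]⟩

lemma apply_rankOne_eq_zero (hE : 2 < finrank ℂ E) (hψ : ‖ψ‖ = 1)
    (hT : ∀ V : E ≃ₗᵢ[ℂ] E, ∀ w, ⟪V ψ, w⟫_ℂ = 0 → T (V : E →L[ℂ] E) w = 0)
    {x : E} (hx : ‖x‖ = 1) (hxψ : x = ψ ∨ ⟪x, ψ⟫_ℂ = 0) (u : E) : T (rankOne ℂ u x) = 0 := by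
  let f : E →ₗ[ℂ] E →ₗ[ℂ] F := T ∘ₗ ((rankOne ℂ).flip x : E →L[ℂ] E →L[ℂ] E).toLinearMap
  have hf_unit (u w : E) (hu : ‖u‖ = 1) (huw : ⟪u, w⟫_ℂ = 0) : f u w = 0 := by
    obtain ⟨V, rfl, hVw⟩ :=
      exists_linearIsometryEquiv_apply_eq_and_inner_eq_zero hE hx hψ hxψ hu huw
    exact apply_rankOne_eq_zero_of_inner_eq_zero hT hx hxψ V hVw
  have hf (u w : E) (huw : ⟪u, w⟫_ℂ = 0) : f u w = 0 := by
    obtain rfl | hu := eq_or_ne u 0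
    · simp
    · have := hf_unit _ w (norm_smul_inv_norm (𝕜 := ℂ) hu) (by rw [inner_smul_left, huw, mul_zero])
      simpa [hu] using this
  exact LinearMap.congr_fun (eq_zero_of_apply_orthogonal_eq_zero (by omega) hf) u

theorem eq_zero_of_apply_linearIsometryEquiv_eq_zero (hE : 2 < finrank ℂ E) (hψ : ‖ψ‖ = 1)
    (hT : ∀ V : E ≃ₗᵢ[ℂ] E, ∀ w, ⟪V ψ, w⟫_ℂ = 0 → T (V : E →L[ℂ] E) w = 0) : T = 0 := by
  obtain ⟨s, b, hψs, hb⟩ := Orthonormal.exists_orthonormalBasis_extension (𝕜 := ℂ) (v := {ψ})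
    (by simpa using hψ)
  have hψb : b ⟨ψ, hψs rfl⟩ = ψ := congrFun hb _
  have hbψ (i : s) : b i = ψ ∨ ⟪b i, ψ⟫_ℂ = 0 := by
    rw [← hψb]
    exact (eq_or_ne i _).imp (congrArg b) (b.orthonormal.2 ·)
  ext1 A
  rw [← sum_rankOne_apply_orthonormalBasis b A, map_sum, LinearMap.zero_apply]
  exact Finset.sum_eq_zero fun i _ => apply_rankOne_eq_zero hE hψ hT (b.orthonormal.1 i) (hbψ i) _

end Complex

end InnerProductSpace

section Matrix

variable {n F : Type*} [Fintype n] [DecidableEq n]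

lemma star_mulVec_dotProduct_mulVec {R : Type*} [CommRing R] [StarRing R] {V : Matrix n n R}
    (hV : V ∈ unitaryGroup n R) (v : n → R) :
    star (V *ᵥ v) ⬝ᵥ (V *ᵥ v) = star v ⬝ᵥ v := by
  rw [star_mulVec, dotProduct_mulVec, vecMul_vecMul, ← star_eq_conjTranspose,
    mem_unitaryGroup_iff'.1 hV, vecMul_one]

lemma adjugate_eq_conjTranspose_of_mem_specialUnitaryGroup {R : Type*} [CommRing R] [StarRing R]
    {U : Matrix n n R} (hU : U ∈ specialUnitaryGroup n R) : adjugate U = Uᴴ := by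
  obtain ⟨hU, hdet⟩ := mem_specialUnitaryGroup_iff.1 hU
  calc adjugate U = Uᴴ * U * adjugate U := by
        rw [← star_eq_conjTranspose, mem_unitaryGroup_iff'.1 hU, Matrix.one_mul]
    _ = Uᴴ := by rw [Matrix.mul_assoc, mul_adjugate, hdet, one_smul, Matrix.mul_one]

lemma exists_smul_mem_specialUnitaryGroup [Nonempty n] {V : Matrix n n ℂ}
    (hV : V ∈ unitaryGroup n ℂ) : ∃ z : ℂ, z ≠ 0 ∧ z • V ∈ specialUnitaryGroup n ℂ := by
  have hdet := det_of_mem_unitary hV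
  obtain ⟨z, hz⟩ := IsAlgClosed.exists_pow_nat_eq (star V.det) (Fintype.card_pos (α := n))
  have norm_z : ‖z‖ = 1 := by
    refine (pow_eq_one_iff_of_nonneg (norm_nonneg z) (Fintype.card_ne_zero (α := n))).1 ?_
    rw [← norm_pow, hz, norm_star, CStarRing.norm_of_mem_unitary hdet]
  have hz_unitary : z ∈ unitary ℂ := by
    simp [Unitary.mem_iff_self_mul_star, Complex.mul_conj', norm_z]
  refine ⟨z, norm_ne_zero_iff.1 (norm_z ▸ one_ne_zero), mem_specialUnitaryGroup_iff.2 ⟨?_, ?_⟩⟩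
  · exact Unitary.smul_mem_of_mem hz_unitary hV
  · rw [det_smul, hz, Unitary.star_mul_self_of_mem hdet]

variable [AddCommGroup F] [Module ℂ F] {T : Matrix n n ℂ →ₗ[ℂ] (n → ℂ) →ₗ[ℂ] F} {ψ : n → ℂ}

lemma eq_zero_of_apply_mem_unitaryGroup_eq_zero (hn : 2 < Fintype.card n)
    (hψ : star ψ ⬝ᵥ ψ = 1)
    (hT : ∀ V ∈ unitaryGroup n ℂ, ∀ w, star (V *ᵥ ψ) ⬝ᵥ w = 0 → T V w = 0) : T = 0 := by
  let m : (EuclideanSpace ℂ n →L[ℂ] EuclideanSpace ℂ n) ≃⋆ₐ[ℂ] Matrix n n ℂ :=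
    toEuclideanCLM.symm
  let T' : (EuclideanSpace ℂ n →L[ℂ] EuclideanSpace ℂ n) →ₗ[ℂ] EuclideanSpace ℂ n →ₗ[ℂ] F :=
    T.compl₁₂ (m : _ →ₗ[ℂ] Matrix n n ℂ) (WithLp.linearEquiv 2 ℂ (n → ℂ)).toLinearMap
  have norm_ψ : ‖WithLp.toLp 2 ψ‖ = 1 := by
    rw [← pow_eq_one_iff_of_nonneg (norm_nonneg _) two_ne_zero, norm_sq_eq_re_inner (𝕜 := ℂ),
      EuclideanSpace.inner_toLp_toLp, dotProduct_comm, hψ, RCLike.one_re]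
  have hT' : T' = 0 := by
    refine eq_zero_of_apply_linearIsometryEquiv_eq_zero (ψ := WithLp.toLp 2 ψ) (by simpa) norm_ψ
      fun V w hw => ?_
    have hmV : m V ∈ unitaryGroup n ℂ := Unitary.map_mem m (Unitary.linearIsometryEquiv.symm V).2
    have hVψ : V (WithLp.toLp 2 ψ) = WithLp.toLp 2 (m V *ᵥ ψ) := by
      rw [← toEuclideanCLM_toLp]
      simp [m]
    refine hT (m V) hmV w.ofLp ?_
    rw [hVψ, EuclideanSpace.inner_eq_star_dotProduct] at hw
    rwa [dotProduct_comm]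
  refine LinearMap.ext₂ fun A w => ?_
  simpa [T', m] using congr($hT' (toEuclideanCLM (𝕜 := ℂ) A) (WithLp.toLp 2 w))

theorem eq_zero_of_apply_mem_specialUnitaryGroup_eq_zero (hn : 2 < Fintype.card n)
    (hψ : star ψ ⬝ᵥ ψ = 1)
    (hT : ∀ V ∈ specialUnitaryGroup n ℂ, ∀ w, star (V *ᵥ ψ) ⬝ᵥ w = 0 → T V w = 0) : T = 0 := by
  have : Nonempty n := Fintype.card_pos_iff.1 (by omega)
  refine eq_zero_of_apply_mem_unitaryGroup_eq_zero hn hψ fun V hV w hw => ?_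
  obtain ⟨z, hz, hzV⟩ := exists_smul_mem_specialUnitaryGroup hV
  have hzw : star ((z • V) *ᵥ ψ) ⬝ᵥ w = 0 := by
    rw [smul_mulVec, star_smul, smul_dotProduct, hw, smul_zero]
  have hTzV := hT (z • V) hzV w hzw
  rw [map_smul, LinearMap.smul_apply] at hTzV
  exact (smul_eq_zero.1 hTzV).resolve_left hz

end Matrix

section OuterAndPartialTrace

variable {α β : Type*} [Fintype α] [Fintype β]

lemma trace_outer (v : α → ℂ) : (outer v).trace = star v ⬝ᵥ v := by
  rw [outer, trace_vecMulVec, dotProduct_comm]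

lemma outer_mulVec (v w : α → ℂ) : outer v *ᵥ w = (star v ⬝ᵥ w) • v := by
  rw [outer, vecMulVec_mulVec, op_smul_eq_smul]

lemma trace_ptrLeft (X : Matrix (α × β) (α × β) ℂ) : (ptrLeft X).trace = X.trace :=
  (Fintype.sum_prod_type_right fun x => X x x).symm

lemma trace_mul_kronecker_one [DecidableEq β] (X : Matrix (α × β) (α × β) ℂ) (P : Matrix α α ℂ) :
    (X * (P ⊗ₖ (1 : Matrix β β ℂ))).trace = (ptrRight X * P).trace := by
  simp only [trace, diag_apply, mul_apply, ptrRight, Fintype.sum_prod_type, one_apply,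
    kroneckerMap_apply, mul_ite, mul_one, mul_zero, Finset.sum_ite_eq',
    Finset.mem_univ, if_true, Finset.sum_mul]
  exact Finset.sum_congr rfl fun a _ => Finset.sum_comm

end OuterAndPartialTrace

section Act

variable {d dF : ℕ}

lemma mconj_mconj (U : Matrix (Fin d) (Fin d) ℂ) : mconj (mconj U) = U := by
  ext; simp [mconj]

lemma mconj_eq_transpose_conjTranspose (U : Matrix (Fin d) (Fin d) ℂ) : mconj U = Uᴴᵀ := rfl

lemma mconj_mem_unitaryGroup {U : Matrix (Fin d) (Fin d) ℂ} (hU : U ∈ unitaryGroup (Fin d) ℂ) :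
    mconj U ∈ unitaryGroup (Fin d) ℂ :=
  map_star_mem_unitaryGroup_iff.2 hU

lemma mconj_mem_specialUnitaryGroup {U : Matrix (Fin d) (Fin d) ℂ}
    (hU : U ∈ specialUnitaryGroup (Fin d) ℂ) : mconj U ∈ specialUnitaryGroup (Fin d) ℂ := by
  obtain ⟨hU, hdet⟩ := mem_specialUnitaryGroup_iff.1 hU
  refine mem_specialUnitaryGroup_iff.2 ⟨mconj_mem_unitaryGroup hU, ?_⟩
  rw [mconj_eq_transpose_conjTranspose, det_transpose, det_conjTranspose, hdet, star_one]

lemma mconj_mul_outer_mul_transpose (U : Matrix (Fin d) (Fin d) ℂ) (ψ : Fin d → ℂ) :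
    mconj U * outer ψ * Uᵀ = outer (mconj U *ᵥ ψ) := by
  have : (mconj U)ᴴ = Uᵀ := by ext; simp [mconj]
  rw [outer, outer, mul_vecMulVec, vecMulVec_mul, star_mulVec, this]

/-- The operator `|A⟩⟩ ⊗ 1_F`, as a linear function of `A`. -/
def choiTensor (dF : ℕ) :
    Matrix (Fin d) (Fin d) ℂ →ₗ[ℂ] Matrix ((Fin d × Fin d) × Fin dF) (Fin dF) ℂ where
  toFun A := of fun x f => choiVec A x.1 * (1 : Matrix (Fin dF) (Fin dF) ℂ) x.2 f
  map_add' A B := by ext; simp [choiVec, add_mul]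
  map_smul' c A := by ext; simp [choiVec, mul_assoc]

lemma choiTensor_apply (A : Matrix (Fin d) (Fin d) ℂ) (x : (Fin d × Fin d) × Fin dF)
    (f : Fin dF) : choiTensor dF A x f = if x.2 = f then choiVec A x.1 else 0 := by
  simp [choiTensor, one_apply]

lemma act_eq_conjTranspose_mul_mul
    (S : Matrix ((Fin d × Fin d) × Fin dF) ((Fin d × Fin d) × Fin dF) ℂ)
    (U : Matrix (Fin d) (Fin d) ℂ) :
    act S U = (choiTensor dF (mconj U))ᴴ * S * choiTensor dF (mconj U) := by
  ext f g
  let v := choiVec (mconj U)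
  calc act S U f g = ∑ a, ∑ b, S (a, f) (b, g) * (v b * star (v a)) := by
        simp [act, ptrLeft, mul_apply, choiProj, outer, vecMulVec_apply, one_apply, v,
          Fintype.sum_prod_type (α₁ := Fin d × Fin d)]
    _ = ∑ b, ∑ a, star (v a) * S (a, f) (b, g) * v b := by
        rw [Finset.sum_comm]
        exact Finset.sum_congr rfl fun b _ => Finset.sum_congr rfl fun a _ => by ring
    _ = ((choiTensor dF (mconj U))ᴴ * S * choiTensor dF (mconj U)) f g := by
        simp [mul_apply, choiTensor_apply, apply_ite, Finset.sum_mul, v,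
          Fintype.sum_prod_type (α₁ := Fin d × Fin d)]

lemma choiTensor_single_mulVec_single (i o : Fin d) (f : Fin dF) :
    choiTensor dF (single o i 1) *ᵥ Pi.single f 1 = Pi.single ((i, o), f) 1 := by
  ext x
  simp only [mulVec_single_one, col_apply, choiTensor_apply, choiVec, single_apply, Pi.single_apply,
    Prod.ext_iff]
  grind

lemma trace_kronecker_one_mul_choiProj (σ A : Matrix (Fin d) (Fin d) ℂ) :
    ((σ ⊗ₖ (1 : Matrix (Fin d) (Fin d) ℂ)) * choiProj A).trace = (Aᴴ * A * σᵀ).trace := by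
  have choiVec_eq_vec : choiVec A = vec A := rfl
  rw [choiProj, outer, choiVec_eq_vec, mul_vecMulVec, trace_vecMulVec, kronecker_mulVec_vec,
    Matrix.one_mul, dotProduct_comm, star_vec_dotProduct_vec, Matrix.mul_assoc]

lemma act_sub (S S' : Matrix ((Fin d × Fin d) × Fin dF) ((Fin d × Fin d) × Fin dF) ℂ)
    (U : Matrix (Fin d) (Fin d) ℂ) : act (S - S') U = act S U - act S' U := by
  simp only [act_eq_conjTranspose_mul_mul, Matrix.mul_sub, Matrix.sub_mul]

lemma posSemidef_act {S : Matrix ((Fin d × Fin d) × Fin dF) ((Fin d × Fin d) × Fin dF) ℂ}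
    (hS : S.PosSemidef) (U : Matrix (Fin d) (Fin d) ℂ) : (act S U).PosSemidef := by
  rw [act_eq_conjTranspose_mul_mul]
  exact hS.conjTranspose_mul_mul_same _

lemma IsProtocol.trace_act_le_one
    {S Sch : Matrix ((Fin d × Fin d) × Fin dF) ((Fin d × Fin d) × Fin dF) ℂ}
    (h : IsProtocol S Sch) {U : Matrix (Fin d) (Fin d) ℂ} (hU : U ∈ unitaryGroup (Fin d) ℂ) :
    (act S U).trace ≤ 1 := by
  obtain ⟨-, hSch, σ, -, hσ, hptr⟩ := h
  have trace_act_sch : (act Sch U).trace = 1 := by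
    rw [act, trace_ptrLeft, trace_mul_kronecker_one, hptr, trace_kronecker_one_mul_choiProj,
      ← star_eq_conjTranspose, mem_unitaryGroup_iff'.1 (mconj_mem_unitaryGroup hU),
      Matrix.one_mul, trace_transpose, hσ]
  have := (posSemidef_act hSch U).trace_nonneg
  rwa [act_sub, trace_sub, trace_act_sch, sub_nonneg] at this

lemma mul_choiTensor_mulVec_eq_zero
    {S : Matrix ((Fin d × Fin d) × Fin dF) ((Fin d × Fin d) × Fin dF) ℂ}
    (hS : S.PosSemidef) {U : Matrix (Fin d) (Fin d) ℂ} {w : Fin dF → ℂ} (h : act S U *ᵥ w = 0) :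
    (S * choiTensor dF (mconj U)) *ᵥ w = 0 := by
  rw [← mulVec_mulVec, ← hS.dotProduct_mulVec_zero_iff, star_mulVec, ← dotProduct_mulVec,
    mulVec_mulVec, mulVec_mulVec, ← act_eq_conjTranspose_mul_mul, h, dotProduct_zero]

theorem eq_zero_of_act_mulVec_eq_zero (hd : 2 < d)
    {S : Matrix ((Fin d × Fin d) × Fin d) ((Fin d × Fin d) × Fin d) ℂ} (hS : S.PosSemidef)
    {ψ : Fin d → ℂ} (hψ : star ψ ⬝ᵥ ψ = 1)
    (h : ∀ U ∈ specialUnitaryGroup (Fin d) ℂ, ∀ w,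
      star (mconj U *ᵥ ψ) ⬝ᵥ w = 0 → act S U *ᵥ w = 0) : S = 0 := by
  let T : Matrix (Fin d) (Fin d) ℂ →ₗ[ℂ] (Fin d → ℂ) →ₗ[ℂ] ((Fin d × Fin d) × Fin d → ℂ) :=
    toLin'.toLinearMap ∘ₗ mulLeftLinearMap _ ℂ S ∘ₗ choiTensor d
  have hT : T = 0 := by
    refine eq_zero_of_apply_mem_specialUnitaryGroup_eq_zero (by simpa) hψ fun V hV w hw => ?_
    have := mul_choiTensor_mulVec_eq_zero hS (U := mconj V) (w := w)
      (h _ (mconj_mem_specialUnitaryGroup hV) w (by rwa [mconj_mconj]))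
    rwa [mconj_mconj] at this
  ext x ⟨⟨i, o⟩, f⟩
  calc S x ((i, o), f) = (S *ᵥ Pi.single ((i, o), f) 1) x := by simp
    _ = T (single o i 1) (Pi.single f 1) x := by
      rw [← choiTensor_single_mulVec_single, mulVec_mulVec]; rfl
    _ = 0 := by rw [hT]; rfl

/-- The vector `φ ⊗ (e_1 ⊗ e_0 - e_0 ⊗ e_1)` on `I ⊗ O ⊗ F`, whose second factor is the
unnormalised singlet of the qubits `O` and `F`. -/
def singletVec (φ : Fin 2 → ℂ) : (Fin 2 × Fin 2) × Fin 2 → ℂ :=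
  fun x => φ x.1.1 * !![0, 1; -1, 0] x.2 x.1.2

lemma act_outer (s : (Fin d × Fin d) × Fin dF → ℂ) (U : Matrix (Fin d) (Fin d) ℂ) :
    act (outer s) U = outer ((choiTensor dF (mconj U))ᴴ *ᵥ s) := by
  rw [act_eq_conjTranspose_mul_mul, outer, outer, mul_vecMulVec, vecMulVec_mul, star_mulVec,
    conjTranspose_conjTranspose]

lemma act_outer_singletVec (ψ : Fin 2 → ℂ) (U : Matrix (Fin 2) (Fin 2) ℂ) :
    act (outer (singletVec ![-ψ 1, ψ 0])) U = outer ((adjugate U)ᵀ *ᵥ ψ) := by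
  rw [act_outer]
  congr 1
  ext f
  fin_cases f <;>
    simp [mulVec, dotProduct, Fintype.sum_prod_type, Fin.sum_univ_two, choiTensor_apply, choiVec,
      mconj, singletVec, adjugate_fin_two, mul_comm, add_comm]

lemma isProtocol_outer_singletVec {φ : Fin 2 → ℂ} (hφ : star φ ⬝ᵥ φ = 1) :
    IsProtocol (outer (singletVec φ)) (outer (singletVec φ)) := by
  refine ⟨posSemidef_vecMulVec_self_star _, by simpa using PosSemidef.zero,
    outer φ, posSemidef_vecMulVec_self_star _, by rw [trace_outer, hφ], ?_⟩
  ext ⟨i, o⟩ ⟨i', o'⟩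
  fin_cases o <;> fin_cases o' <;>
    simp [ptrRight, outer, vecMulVec_apply, Fin.sum_univ_two, singletVec]

end Act

theorem conjugation_single_call_known_pure_state_general
    (d : ℕ) (ψ : Fin d → ℂ) (hψ : star ψ ⬝ᵥ ψ = 1) :
    (2 < d →
      ∀ (S : Matrix ((Fin d × Fin d) × Fin d) ((Fin d × Fin d) × Fin d) ℂ)
        (p : Matrix (Fin d) (Fin d) ℂ → ℝ), S.PosSemidef →
        (∀ U ∈ specialUnitaryGroup (Fin d) ℂ,
          act S U = (p U : ℂ) • (mconj U * outer ψ * Uᵀ)) →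
        ∀ U ∈ specialUnitaryGroup (Fin d) ℂ, p U = 0) ∧
    (d = 2 →
      ∃ S Sch : Matrix ((Fin d × Fin d) × Fin d) ((Fin d × Fin d) × Fin d) ℂ, IsProtocol S Sch ∧
        ∀ U ∈ specialUnitaryGroup (Fin d) ℂ,
          act S U = ((1 : ℝ) : ℂ) • (mconj U * outer ψ * Uᵀ)) ∧
    (∀ (S Sch : Matrix ((Fin d × Fin d) × Fin d) ((Fin d × Fin d) × Fin d) ℂ)
      (p : Matrix (Fin d) (Fin d) ℂ → ℝ), IsProtocol S Sch →
      (∀ U ∈ specialUnitaryGroup (Fin d) ℂ,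
        act S U = (p U : ℂ) • (mconj U * outer ψ * Uᵀ)) →
      ∀ U ∈ specialUnitaryGroup (Fin d) ℂ, p U ≤ 1) := by
  have trace_act {S : Matrix ((Fin d × Fin d) × Fin d) ((Fin d × Fin d) × Fin d) ℂ}
      {U : Matrix (Fin d) (Fin d) ℂ} {q : ℝ} (hU : U ∈ specialUnitaryGroup (Fin d) ℂ)
      (h : act S U = (q : ℂ) • (mconj U * outer ψ * Uᵀ)) : (act S U).trace = q := by
    rw [h, mconj_mul_outer_mul_transpose, trace_smul, trace_outer,
      star_mulVec_dotProduct_mulVec (mconj_mem_unitaryGroup hU.1), hψ, smul_eq_mul, mul_one]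
  refine ⟨fun hd S p hS h U hU => ?_, ?_, fun S Sch p hS h U hU => ?_⟩
  · have S_eq_zero : S = 0 := eq_zero_of_act_mulVec_eq_zero hd hS hψ fun V hV w hw => by
      rw [h V hV, mconj_mul_outer_mul_transpose, smul_mulVec, outer_mulVec, hw, zero_smul,
        smul_zero]
    simpa [S_eq_zero, act_eq_conjTranspose_mul_mul, eq_comm] using trace_act hU (h U hU)
  · rintro rfl
    refine ⟨_, _, isProtocol_outer_singletVec (φ := ![-ψ 1, ψ 0]) ?_, fun U hU => ?_⟩
    · simpa [dotProduct, Fin.sum_univ_two, add_comm] using hψ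
    · rw [act_outer_singletVec, adjugate_eq_conjTranspose_of_mem_specialUnitaryGroup hU,
        mconj_mul_outer_mul_transpose, mconj_eq_transpose_conjTranspose, Complex.ofReal_one,
        one_smul]
  · exact_mod_cast trace_act hU (h U hU) ▸ hS.trace_act_le_one hU.1

/-- **Probabilistic exact unitary complex conjugation on a known pure state, single
call.** For `d > 2` every protocol implementing `U ↦ p · U̅|ψ⟩⟨ψ|Uᵀ` for all
`U ∈ SU(d)` has `p = 0`; for `d = 2` the maximal success probability is `1`. -/
theorem conjugation_single_call_known_pure_state
    (d : ℕ) (hd : 2 ≤ d) (ψ : Fin d → ℂ) (hψ : star ψ ⬝ᵥ ψ = 1) :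
    (2 < d →
      ∀ (S Sch : Matrix ((Fin d × Fin d) × Fin d) ((Fin d × Fin d) × Fin d) ℂ) (p : ℝ),
        IsProtocol S Sch →
        (∀ U : Matrix (Fin d) (Fin d) ℂ, U ∈ Matrix.specialUnitaryGroup (Fin d) ℂ →
          act S U = (p : ℂ) • (mconj U * outer ψ * Uᵀ)) →
        p = 0) ∧
    (d = 2 →
      (∃ S Sch : Matrix ((Fin d × Fin d) × Fin d) ((Fin d × Fin d) × Fin d) ℂ,
        IsProtocol S Sch ∧
        ∀ U : Matrix (Fin d) (Fin d) ℂ, U ∈ Matrix.specialUnitaryGroup (Fin d) ℂ →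
          act S U = ((1 : ℝ) : ℂ) • (mconj U * outer ψ * Uᵀ)) ∧
      (∀ (S Sch : Matrix ((Fin d × Fin d) × Fin d) ((Fin d × Fin d) × Fin d) ℂ) (p : ℝ),
        IsProtocol S Sch →
        (∀ U : Matrix (Fin d) (Fin d) ℂ, U ∈ Matrix.specialUnitaryGroup (Fin d) ℂ →
          act S U = (p : ℂ) • (mconj U * outer ψ * Uᵀ)) →
        p ≤ 1)) := by
  obtain ⟨h_gt, h_two, h_le⟩ := conjugation_single_call_known_pure_state_general d ψ hψ
  exact ⟨fun h2 S Sch p hS h => h_gt h2 S (fun _ => p) hS.1 h 1 (one_mem _),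
    fun h2 => ⟨h_two h2, fun S Sch p hS h => h_le S Sch (fun _ => p) hS h 1 (one_mem _)⟩⟩
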